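/- arXiv:2401.02520 — 6 statements merged into one kernel-verified Lean document; each statement's English description precedes it below -/
import Mathlib

section
/- Let p, r̄, s̄ be positive integers and μ̄ > 0. Suppose c̃ > 0 is a constant with the separation property: for all matrices P' = UΣVᵀ and Q' = LΛRᵀ with U, V, L, R ∈ O_{p,r̄} all μ̄-incoherent and Σ, Λ diagonal with nonnegative entries, one has ‖P'−Q'‖_max² ≤ (c̃ μ̄ r̄⁴ / p)·‖P'−Q'‖_F². Assume s̄ ≤ p/(8 c̃ μ̄ r̄⁴), and let Y = L* + S* + W in ℝ^{p×p}, where L* = U*Σ*V*ᵀ with U*, V* ∈ O_{p,r̄} μ̄-incoherent and Σ* diagonal with nonnegative entries, and ‖S*‖₀ ≤ s̄. Suppose (L̂, Ŝ) is feasible, i.e. L̂ = ÛΣ̂V̂ᵀ with Û, V̂ ∈ O_{p,r̄} μ̄-incoherent and Σ̂ diagonal with nonnegative entries, ‖Ŝ‖₀ ≤ s̄, and optimal in the sense that ‖Y − L̂ − Ŝ‖_F ≤ ‖Y − L* − S*‖_F. Then ‖L̂ − L*‖_F² + ‖Ŝ − S*‖_F² ≤ 128·( r̄·‖W‖² + s̄·‖W‖_max²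 ), where ‖W‖ is the spectral norm of W. -/
open Matrix
open scoped BigOperators RealInnerProductSpace

noncomputable def frobNorm {m n : Type*} [Fintype m] [Fintype n] (M : Matrix m n ℝ) : ℝ :=
  Real.sqrt (∑ i, ∑ j, (M i j) ^ 2)

noncomputable def frobInner {m n : Type*} [Fintype m] [Fintype n] (A B : Matrix m n ℝ) : ℝ :=
  ∑ i, ∑ j, A i j * B i j

noncomputable def maxNorm {m n : Type*} [Fintype m] [Fintype n] (M : Matrix m n ℝ) : ℝ :=
  ⨆ i, ⨆ j, |M i j|

noncomputable def l0Norm {m n : Type*} (M : Matrix m n ℝ) : ℕ :=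
  Set.ncard {ij : m × n | M ij.1 ij.2 ≠ 0}

noncomputable def specNorm {p q : ℕ} (M : Matrix (Fin p) (Fin q) ℝ) : ℝ :=
  ‖LinearMap.toContinuousLinearMap (Matrix.toEuclideanLin M)‖

def Incoherent {p r : ℕ} (μ : ℝ) (U : Matrix (Fin p) (Fin r) ℝ) : Prop :=
  ∀ i, Real.sqrt (∑ j, (U i j) ^ 2) ≤ Real.sqrt (μ * r / p)

def SepProp (p r : ℕ) (μ c : ℝ) : Prop :=
  ∀ (U V L R : Matrix (Fin p) (Fin r) ℝ) (S Lam : Matrix (Fin r) (Fin r) ℝ),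
    Uᵀ * U = 1 → Vᵀ * V = 1 → Lᵀ * L = 1 → Rᵀ * R = 1 →
    Incoherent μ U → Incoherent μ V → Incoherent μ L → Incoherent μ R →
    S.IsDiag → (∀ i, 0 ≤ S i i) → Lam.IsDiag → (∀ i, 0 ≤ Lam i i) →
    maxNorm (U * S * Vᵀ - L * Lam * Rᵀ) ^ 2 ≤
      (c * μ * (r : ℝ) ^ 4 / p) * frobNorm (U * S * Vᵀ - L * Lam * Rᵀ) ^ 2

noncomputable def l1Norm {m n : Type*} [Fintype m] [Fintype n] (M : Matrix m n ℝ) : ℝ :=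
  ∑ i, ∑ j, |M i j|

noncomputable def nuclearNorm {p q : ℕ} (M : Matrix (Fin p) (Fin q) ℝ) : ℝ :=
  sSup {x : ℝ | ∃ X : Matrix (Fin p) (Fin q) ℝ, specNorm X ≤ 1 ∧ x = frobInner M X}

noncomputable def Phi {p : ℕ} (lam : ℝ) (Δ : Matrix (Fin p) (Fin p) ℝ) : ℝ :=
  sInf {x : ℝ | ∃ L S : Matrix (Fin p) (Fin p) ℝ, L + S = Δ ∧ x = nuclearNorm L + lam * l1Norm S}

/-!
Write `D = L̂ - L*` and `E = Ŝ - S*`, so that `rank D ≤ 2r` and `‖E‖₀ ≤ 2s`. Optimality amounts to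
the basic inequality `‖D + E‖_F² ≤ 2⟨W, D + E⟩`. Its right-hand side is controlled by the two
dualities `⟨W, D⟩ ≤ √(rank D) ‖W‖ ‖D‖_F` and `⟨W, E⟩ ≤ √‖E‖₀ ‖W‖_max ‖E‖_F`. For its left-hand
side, the second duality bounds `⟨D, E⟩` by `√‖E‖₀ ‖D‖_max ‖E‖_F`, and separation together with
sparsity makes `2 √‖E‖₀ ‖D‖_max ≤ ‖D‖_F`; so `D` and `E` are nearly orthogonal, and `‖D + E‖_F²` is
at least half of `‖D‖_F² + ‖E‖_F²`.
-/

section Frobenius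

variable {m n k : Type*} [Fintype m] [Fintype n] [Fintype k]

lemma frobNorm_nonneg (M : Matrix m n ℝ) : 0 ≤ frobNorm M :=
  Real.sqrt_nonneg _

lemma frobNorm_sq (M : Matrix m n ℝ) : frobNorm M ^ 2 = ∑ i, ∑ j, M i j ^ 2 :=
  Real.sq_sqrt (by positivity)

lemma frobInner_self (M : Matrix m n ℝ) : frobInner M M = frobNorm M ^ 2 := by
  simp only [frobNorm_sq, frobInner, pow_two (M _ _)]

lemma frobInner_eq_trace (A B : Matrix m n ℝ) : frobInner A B = (Aᵀ * B).trace := by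
  simp only [frobInner, Matrix.trace, Matrix.diag_apply, Matrix.mul_apply, Matrix.transpose_apply]
  exact Finset.sum_comm

lemma frobInner_add_right (A B C : Matrix m n ℝ) :
    frobInner A (B + C) = frobInner A B + frobInner A C := by
  simp only [frobInner, Matrix.add_apply, mul_add, Finset.sum_add_distrib]

lemma frobInner_mul_transpose_right (A : Matrix m n ℝ) (B : Matrix m k ℝ) (C : Matrix n k ℝ) :
    frobInner A (B * Cᵀ) = frobInner (A * C) B := by
  rw [frobInner_eq_trace, frobInner_eq_trace, Matrix.transpose_mul, ← Matrix.mul_assoc,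
    Matrix.trace_mul_comm, Matrix.mul_assoc]

lemma frobInner_le_frobNorm_mul_frobNorm (A B : Matrix m n ℝ) :
    frobInner A B ≤ frobNorm A * frobNorm B := by
  simpa only [frobInner, frobNorm, Fintype.sum_prod_type] using
    Real.sum_mul_le_sqrt_mul_sqrt Finset.univ (fun x : m × n => A x.1 x.2) fun x => B x.1 x.2

lemma frobNorm_add_sq (A B : Matrix m n ℝ) :
    frobNorm (A + B) ^ 2 = frobNorm A ^ 2 + 2 * frobInner A B + frobNorm B ^ 2 := by
  simp only [frobNorm_sq, frobInner, Finset.mul_sum, ← Finset.sum_add_distrib, Matrix.add_apply,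
    add_sq, mul_assoc]

lemma frobNorm_sub_sq (A B : Matrix m n ℝ) :
    frobNorm (A - B) ^ 2 = frobNorm A ^ 2 - 2 * frobInner A B + frobNorm B ^ 2 := by
  simp only [frobNorm_sq, frobInner, Finset.mul_sum, ← Finset.sum_add_distrib,
    ← Finset.sum_sub_distrib, Matrix.sub_apply, sub_sq, mul_assoc]

lemma frobNorm_sq_of_transpose_mul_self_eq_one [DecidableEq k] {Q : Matrix n k ℝ}
    (hQ : Qᵀ * Q = 1) : frobNorm Q ^ 2 = Fintype.card k := by
  rw [← frobInner_self, frobInner_eq_trace, hQ, Matrix.trace_one]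

lemma frobNorm_sq_le_two_mul_frobInner_of_frobNorm_sub_le {W M : Matrix m n ℝ}
    (h : frobNorm (W - M) ≤ frobNorm W) : frobNorm M ^ 2 ≤ 2 * frobInner W M := by
  have hsq := pow_le_pow_left₀ (frobNorm_nonneg _) h 2
  rw [frobNorm_sub_sq] at hsq
  linarith

end Frobenius

section LowRank

lemma rank_sub_le {m n K : Type*} [Finite m] [Fintype n] [Field K] (A B : Matrix m n K) :
    (A - B).rank ≤ A.rank + B.rank := by
  have hrange : (A - B).mulVecLin.range ≤ A.mulVecLin.range ⊔ B.mulVecLin.range := by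
    rintro _ ⟨x, rfl⟩
    rw [Matrix.mulVecLin_apply, Matrix.sub_mulVec]
    exact Submodule.sub_mem_sup ⟨x, rfl⟩ ⟨x, rfl⟩
  exact (Submodule.finrank_mono hrange).trans (Submodule.finrank_add_le_finrank_add_finrank _ _)

lemma exists_orthonormal_columns_mul_transpose_mul_eq_self {m n : Type*} [Fintype m]
    [Fintype n] (A : Matrix m n ℝ) :
    ∃ Q : Matrix m (Fin A.rank) ℝ, Qᵀ * Q = 1 ∧ Q * Qᵀ * A = A := by
  classical
  let R : Submodule ℝ (EuclideanSpace ℝ m) := (Matrix.toEuclideanLin A).range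
  have hR : Module.finrank ℝ R = A.rank :=
    (A.rank_eq_finrank_range_toLin (PiLp.basisFun 2 ℝ m) (PiLp.basisFun 2 ℝ n)).symm
  obtain ⟨b⟩ : Nonempty (OrthonormalBasis (Fin A.rank) ℝ R) :=
    ⟨(stdOrthonormalBasis ℝ R).reindex (finCongr hR)⟩
  let Q : Matrix m (Fin A.rank) ℝ := Matrix.of fun i k => (b k : EuclideanSpace ℝ m) i
  refine ⟨Q, ?_, ?_⟩
  · ext k l
    calc (Qᵀ * Q) k l = inner ℝ (b k) (b l) := by
          simp [Q, Matrix.mul_apply, PiLp.inner_apply, mul_comm]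
      _ = (1 : Matrix _ _ ℝ) k l := by rw [b.inner_eq_ite, Matrix.one_apply]
  · ext i j
    have hcol : WithLp.toLp 2 (A.col j) ∈ R :=
      ⟨EuclideanSpace.single j 1, by simp [Matrix.toLpLin_apply]⟩
    calc (Q * Qᵀ * A) i j
        = (∑ k, inner ℝ (b k) ⟨_, hcol⟩ • b k : R).val i := by
          rw [Matrix.mul_assoc]
          simp [Q, Matrix.mul_apply, PiLp.inner_apply, mul_comm]
      _ = A i j := by rw [b.sum_repr']; rfl

variable {p q : ℕ}

lemma specNorm_nonneg (M : Matrix (Fin p) (Fin q) ℝ) : 0 ≤ specNorm M :=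
  norm_nonneg _

lemma sum_mulVec_sq_le (A : Matrix (Fin p) (Fin q) ℝ) (v : Fin q → ℝ) :
    ∑ i, (A *ᵥ v) i ^ 2 ≤ specNorm A ^ 2 * ∑ j, v j ^ 2 := by
  have h := pow_le_pow_left₀ (norm_nonneg _)
    ((Matrix.toEuclideanLin A).toContinuousLinearMap.le_opNorm (WithLp.toLp 2 v)) 2
  simpa [mul_pow, EuclideanSpace.real_norm_sq_eq, specNorm] using h

lemma frobNorm_mul_le {k : Type*} [Fintype k] (A : Matrix (Fin p) (Fin q) ℝ)
    (B : Matrix (Fin q) k ℝ) : frobNorm (A * B) ≤ specNorm A * frobNorm B := by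
  refine le_of_sq_le_sq ?_ (mul_nonneg (specNorm_nonneg A) (frobNorm_nonneg B))
  calc frobNorm (A * B) ^ 2 = ∑ j, ∑ i, (A *ᵥ B.col j) i ^ 2 := by
        rw [frobNorm_sq, Finset.sum_comm]
        rfl
    _ ≤ ∑ j, specNorm A ^ 2 * ∑ i, B i j ^ 2 :=
        Finset.sum_le_sum fun j _ => sum_mulVec_sq_le A (B.col j)
    _ = (specNorm A * frobNorm B) ^ 2 := by
        rw [← Finset.mul_sum, Finset.sum_comm, ← frobNorm_sq, mul_pow]

lemma frobInner_le_sqrt_rank_mul (W D : Matrix (Fin p) (Fin q) ℝ) :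
    frobInner W D ≤ √D.rank * specNorm W * frobNorm D := by
  obtain ⟨Q, hQ, hQD⟩ := exists_orthonormal_columns_mul_transpose_mul_eq_self Dᵀ
  have hD : D * Q * Qᵀ = D := by
    simpa [Matrix.mul_assoc] using congrArg Matrix.transpose hQD
  have hQnorm : frobNorm Q = √D.rank := by
    rw [← Real.sqrt_sq (frobNorm_nonneg Q), frobNorm_sq_of_transpose_mul_self_eq_one hQ,
      Fintype.card_fin, Matrix.rank_transpose]
  have hDQ : frobNorm (D * Q) = frobNorm D := by
    rw [← sq_eq_sq₀ (frobNorm_nonneg _) (frobNorm_nonneg _), ← frobInner_self, ← frobInner_self,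
      ← frobInner_mul_transpose_right, hD]
  calc frobInner W D = frobInner (W * Q) (D * Q) := by rw [← frobInner_mul_transpose_right, hD]
    _ ≤ frobNorm (W * Q) * frobNorm (D * Q) := frobInner_le_frobNorm_mul_frobNorm _ _
    _ ≤ specNorm W * frobNorm Q * frobNorm (D * Q) := by
      gcongr
      exacts [frobNorm_nonneg _, frobNorm_mul_le W Q]
    _ = √D.rank * specNorm W * frobNorm D := by rw [hQnorm, hDQ, mul_comm (specNorm W)]

end LowRank

section Sparse

variable {m n : Type*}

lemma l0Norm_sub_le [Finite m] [Finite n] (A B : Matrix m n ℝ) :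
    l0Norm (A - B) ≤ l0Norm A + l0Norm B := by
  refine (Set.ncard_le_ncard (fun x hx => ?_) (Set.toFinite _)).trans (Set.ncard_union_le _ _)
  by_contra h
  simp only [Set.mem_union, Set.mem_ofPred_eq, not_or, not_not] at h
  simp [h.1, h.2] at hx

variable [Fintype m] [Fintype n]

lemma maxNorm_nonneg (M : Matrix m n ℝ) : 0 ≤ maxNorm M :=
  Real.iSup_nonneg fun _ => Real.iSup_nonneg fun _ => abs_nonneg _

lemma abs_le_maxNorm (M : Matrix m n ℝ) (i : m) (j : n) : |M i j| ≤ maxNorm M :=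
  (le_ciSup (f := fun j => |M i j|) (Set.finite_range _).bddAbove j).trans
    (le_ciSup (f := fun i => ⨆ j, |M i j|) (Set.finite_range _).bddAbove i)

lemma sum_support_sq_le (M E : Matrix m n ℝ) [DecidablePred fun x : m × n => E x.1 x.2 ≠ 0] :
    ∑ x : m × n with E x.1 x.2 ≠ 0, M x.1 x.2 ^ 2 ≤ l0Norm E * maxNorm M ^ 2 := by
  have hcard : l0Norm E = Finset.card {x : m × n | E x.1 x.2 ≠ 0} := by
    simp [l0Norm, ← Set.ncard_coe_finset]
  rw [hcard, ← nsmul_eq_mul]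
  refine Finset.sum_le_card_nsmul _ _ _ fun x _ => ?_
  exact sq_le_sq.mpr ((abs_le_maxNorm M _ _).trans (le_abs_self _))

lemma abs_frobInner_le_sqrt_l0Norm_mul (M E : Matrix m n ℝ) :
    |frobInner M E| ≤ √(l0Norm E) * maxNorm M * frobNorm E := by
  classical
  have hsupp : frobInner M E = ∑ x : m × n with E x.1 x.2 ≠ 0, M x.1 x.2 * E x.1 x.2 := by
    rw [frobInner, ← Fintype.sum_prod_type' (f := fun i j => M i j * E i j)]
    exact (Finset.sum_filter_of_ne fun x _ => right_ne_zero_of_mul).symm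
  have hE : ∑ x : m × n with E x.1 x.2 ≠ 0, E x.1 x.2 ^ 2 ≤ frobNorm E ^ 2 := by
    rw [frobNorm_sq, ← Fintype.sum_prod_type' (f := fun i j => E i j ^ 2)]
    exact Finset.sum_le_univ_sum_of_nonneg fun _ => sq_nonneg _
  refine abs_le_of_sq_le_sq ?_ (by have := maxNorm_nonneg M; have := frobNorm_nonneg E; positivity)
  calc frobInner M E ^ 2
      ≤ (∑ x : m × n with E x.1 x.2 ≠ 0, M x.1 x.2 ^ 2) *
          ∑ x : m × n with E x.1 x.2 ≠ 0, E x.1 x.2 ^ 2 := by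
        rw [hsupp]
        exact Finset.sum_mul_sq_le_sq_mul_sq _ _ _
    _ ≤ (l0Norm E * maxNorm M ^ 2) * frobNorm E ^ 2 := by
        gcongr
        exact sum_support_sq_le M E
    _ = (√(l0Norm E) * maxNorm M * frobNorm E) ^ 2 := by
        rw [mul_pow, mul_pow, Real.sq_sqrt (Nat.cast_nonneg _)]

lemma frobNorm_sq_add_frobNorm_sq_le_two_mul {D E : Matrix m n ℝ}
    (h : 4 * l0Norm E * maxNorm D ^ 2 ≤ frobNorm D ^ 2) :
    frobNorm D ^ 2 + frobNorm E ^ 2 ≤ 2 * frobNorm (D + E) ^ 2 := by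
  have hspread : 2 * (√(l0Norm E) * maxNorm D) ≤ frobNorm D := by
    refine le_of_sq_le_sq ?_ (frobNorm_nonneg D)
    rw [mul_pow, mul_pow, Real.sq_sqrt (Nat.cast_nonneg _)]
    linarith
  have hcross : 2 * |frobInner D E| ≤ frobNorm D * frobNorm E := by
    have := mul_le_mul_of_nonneg_right hspread (frobNorm_nonneg E)
    linarith [abs_frobInner_le_sqrt_l0Norm_mul D E]
  rw [frobNorm_add_sq]
  linarith [neg_abs_le (frobInner D E), two_mul_le_add_sq (frobNorm D) (frobNorm E)]

end Sparse

section ErrorBound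

variable {p q : ℕ}

lemma add_sq_le_of_add_sq_le_mul_add_mul {a b x y : ℝ}
    (h : x ^ 2 + y ^ 2 ≤ 4 * (a * x + b * y)) : x ^ 2 + y ^ 2 ≤ 16 * (a ^ 2 + b ^ 2) := by
  linarith [sq_nonneg (x - 4 * a), sq_nonneg (y - 4 * b)]

theorem frobNorm_sq_add_frobNorm_sq_le_of_frobNorm_sub_le {W D E : Matrix (Fin p) (Fin q) ℝ}
    (hspread : 4 * l0Norm E * maxNorm D ^ 2 ≤ frobNorm D ^ 2)
    (hopt : frobNorm (W - (D + E)) ≤ frobNorm W) :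
    frobNorm D ^ 2 + frobNorm E ^ 2 ≤
      16 * (D.rank * specNorm W ^ 2 + l0Norm E * maxNorm W ^ 2) := by
  have hD := frobInner_le_sqrt_rank_mul W D
  have hE := (le_abs_self _).trans (abs_frobInner_le_sqrt_l0Norm_mul W E)
  have hbasic : frobNorm D ^ 2 + frobNorm E ^ 2 ≤
      4 * (√D.rank * specNorm W * frobNorm D + √(l0Norm E) * maxNorm W * frobNorm E) :=
    calc frobNorm D ^ 2 + frobNorm E ^ 2
        ≤ 2 * frobNorm (D + E) ^ 2 := frobNorm_sq_add_frobNorm_sq_le_two_mul hspread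
      _ ≤ 4 * frobInner W (D + E) := by
        linarith [frobNorm_sq_le_two_mul_frobInner_of_frobNorm_sub_le hopt]
      _ ≤ _ := by
        rw [frobInner_add_right]
        gcongr
  have hbound := add_sq_le_of_add_sq_le_mul_add_mul hbasic
  rwa [mul_pow, mul_pow, Real.sq_sqrt (Nat.cast_nonneg _),
    Real.sq_sqrt (Nat.cast_nonneg _)] at hbound

theorem stmt1_general {r s : ℕ} {Y W Lstar Sstar Lhat Shat : Matrix (Fin p) (Fin q) ℝ}
    (hY : Y = Lstar + Sstar + W) (hLstar : Lstar.rank ≤ r) (hLhat : Lhat.rank ≤ r)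
    (hSstar : l0Norm Sstar ≤ s) (hShat : l0Norm Shat ≤ s)
    (hspread : 8 * s * maxNorm (Lhat - Lstar) ^ 2 ≤ frobNorm (Lhat - Lstar) ^ 2)
    (hopt : frobNorm (Y - Lhat - Shat) ≤ frobNorm (Y - Lstar - Sstar)) :
    frobNorm (Lhat - Lstar) ^ 2 + frobNorm (Shat - Sstar) ^ 2 ≤
      32 * (r * specNorm W ^ 2 + s * maxNorm W ^ 2) := by
  have hrank : ((Lhat - Lstar).rank : ℝ) ≤ 2 * r := by
    exact_mod_cast (rank_sub_le Lhat Lstar).trans (by omega)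
  have hl0 : (l0Norm (Shat - Sstar) : ℝ) ≤ 2 * s := by
    exact_mod_cast (l0Norm_sub_le Shat Sstar).trans (by omega)
  have hspread' : 4 * l0Norm (Shat - Sstar) * maxNorm (Lhat - Lstar) ^ 2 ≤
      frobNorm (Lhat - Lstar) ^ 2 :=
    (mul_le_mul_of_nonneg_right (by linarith) (sq_nonneg _)).trans hspread
  have hopt' : frobNorm (W - ((Lhat - Lstar) + (Shat - Sstar))) ≤ frobNorm W := by
    convert hopt using 2 <;> rw [hY] <;> abel
  calc frobNorm (Lhat - Lstar) ^ 2 + frobNorm (Shat - Sstar) ^ 2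
      ≤ 16 * ((Lhat - Lstar).rank * specNorm W ^ 2 + l0Norm (Shat - Sstar) * maxNorm W ^ 2) :=
        frobNorm_sq_add_frobNorm_sq_le_of_frobNorm_sub_le hspread' hopt'
    _ ≤ 16 * (2 * r * specNorm W ^ 2 + 2 * s * maxNorm W ^ 2) := by gcongr
    _ = 32 * (r * specNorm W ^ 2 + s * maxNorm W ^ 2) := by ring

end ErrorBound

section Incoherence

variable {p r : ℕ} {μ c : ℝ} {P Q : Matrix (Fin p) (Fin p) ℝ}

/-- The feasible low-rank components: matrices with a singular value decomposition `U Σ Vᵀ` whose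
factors `U`, `V` have `r` orthonormal `μ`-incoherent columns. The diagonal of `Σ` may contain zeros,
so this only forces the rank to be at most `r`. -/
def HasIncoherentSVD (r : ℕ) (μ : ℝ) (P : Matrix (Fin p) (Fin p) ℝ) : Prop :=
  ∃ (U V : Matrix (Fin p) (Fin r) ℝ) (S : Matrix (Fin r) (Fin r) ℝ),
    Uᵀ * U = 1 ∧ Vᵀ * V = 1 ∧ Incoherent μ U ∧ Incoherent μ V ∧
      S.IsDiag ∧ (∀ i, 0 ≤ S i i) ∧ P = U * S * Vᵀ

lemma HasIncoherentSVD.rank_le (hP : HasIncoherentSVD r μ P) : P.rank ≤ r := by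
  obtain ⟨U, V, S, -, -, -, -, -, -, rfl⟩ := hP
  exact (Matrix.rank_mul_le_left _ _).trans (Matrix.rank_le_width _)

lemma SepProp.maxNorm_sub_sq_le (hsep : SepProp p r μ c) (hP : HasIncoherentSVD r μ P)
    (hQ : HasIncoherentSVD r μ Q) :
    maxNorm (P - Q) ^ 2 ≤ c * μ * r ^ 4 / p * frobNorm (P - Q) ^ 2 := by
  obtain ⟨U, V, S, hU, hV, hUi, hVi, hSd, hS, rfl⟩ := hP
  obtain ⟨L, R, T, hL, hR, hLi, hRi, hTd, hT, rfl⟩ := hQ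
  exact hsep U V L R S T hU hV hL hR hUi hVi hLi hRi hSd hS hTd hT

lemma SepProp.mul_maxNorm_sub_sq_le {s : ℕ} (hsep : SepProp p r μ c) (hμ : 0 ≤ μ) (hc : 0 ≤ c)
    (hs : (s : ℝ) ≤ p / (8 * c * μ * r ^ 4)) (hP : HasIncoherentSVD r μ P)
    (hQ : HasIncoherentSVD r μ Q) :
    8 * s * maxNorm (P - Q) ^ 2 ≤ frobNorm (P - Q) ^ 2 := by
  have hratio : 8 * s * (c * μ * r ^ 4 / p) ≤ 1 :=
    calc 8 * s * (c * μ * r ^ 4 / p) = s * (8 * c * μ * r ^ 4 / p) := by ring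
      _ ≤ p / (8 * c * μ * r ^ 4) * (8 * c * μ * r ^ 4 / p) := by gcongr
      _ ≤ 1 := by rw [← inv_div (p : ℝ)]; exact mul_inv_le_one
  calc 8 * s * maxNorm (P - Q) ^ 2
      ≤ 8 * s * (c * μ * r ^ 4 / p * frobNorm (P - Q) ^ 2) := by
        gcongr
        exact hsep.maxNorm_sub_sq_le hP hQ
    _ = 8 * s * (c * μ * r ^ 4 / p) * frobNorm (P - Q) ^ 2 := by ring
    _ ≤ frobNorm (P - Q) ^ 2 := mul_le_of_le_one_left (sq_nonneg _) hratio

end Incoherence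

/-- deterministic error bound for the identity observation model
(low-rank-plus-sparse matrix denoising). -/
theorem stmt1
    (p rbar sbar : ℕ) (hp : 0 < p) (hrbar : 0 < rbar) (hsbar : 0 < sbar)
    (μbar c : ℝ) (hμbar : 0 < μbar) (hc : 0 < c) (hsep : SepProp p rbar μbar c)
    (hsparse : (sbar : ℝ) ≤ (p : ℝ) / (8 * c * μbar * (rbar : ℝ) ^ 4))
    (Y W Lstar Sstar Lhat Shat : Matrix (Fin p) (Fin p) ℝ)
    (Ustar Vstar Uhat Vhat : Matrix (Fin p) (Fin rbar) ℝ)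
    (Sigstar Sighat : Matrix (Fin rbar) (Fin rbar) ℝ)
    (hY : Y = Lstar + Sstar + W)
    (hUo : Ustarᵀ * Ustar = 1) (hVo : Vstarᵀ * Vstar = 1)
    (hUi : Incoherent μbar Ustar) (hVi : Incoherent μbar Vstar)
    (hSigd : Sigstar.IsDiag) (hSignn : ∀ i, 0 ≤ Sigstar i i)
    (hLstar : Lstar = Ustar * Sigstar * Vstarᵀ)
    (hSstar : l0Norm Sstar ≤ sbar)
    (hUho : Uhatᵀ * Uhat = 1) (hVho : Vhatᵀ * Vhat = 1)
    (hUhi : Incoherent μbar Uhat) (hVhi : Incoherent μbar Vhat)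
    (hSighd : Sighat.IsDiag) (hSighnn : ∀ i, 0 ≤ Sighat i i)
    (hLhat : Lhat = Uhat * Sighat * Vhatᵀ)
    (hShat : l0Norm Shat ≤ sbar)
    (hopt : frobNorm (Y - Lhat - Shat) ≤ frobNorm (Y - Lstar - Sstar)) :
    frobNorm (Lhat - Lstar) ^ 2 + frobNorm (Shat - Sstar) ^ 2 ≤
      128 * ((rbar : ℝ) * specNorm W ^ 2 + (sbar : ℝ) * maxNorm W ^ 2) := by
  have hstar : HasIncoherentSVD rbar μbar Lstar :=
    ⟨Ustar, Vstar, Sigstar, hUo, hVo, hUi, hVi, hSigd, hSignn, hLstar⟩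
  have hhat : HasIncoherentSVD rbar μbar Lhat :=
    ⟨Uhat, Vhat, Sighat, hUho, hVho, hUhi, hVhi, hSighd, hSighnn, hLhat⟩
  have hspread := hsep.mul_maxNorm_sub_sq_le hμbar.le hc.le hsparse hhat hstar
  refine (stmt1_general hY hstar.rank_le hhat.rank_le hSstar hShat hspread hopt).trans ?_
  gcongr
  norm_num
end

section
/- (Norm discrepancy lemma.) Let p ≥ r ≥ 1 be integers and let F, G ∈ O_{p,r}. Denote by u = Fᵀe₁ ∈ ℝʳ and v = Gᵀe₁ ∈ ℝʳ the first rows of F and G. Then ‖FᵀG‖_F² ≤ r − (‖u‖ − ‖v‖)², where ‖u‖, ‖v‖ are Euclidean norms. -/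
open Matrix
open scoped BigOperators RealInnerProductSpace

/-!
Let `F` and `G` have `r` orthonormal columns, and let `E = F - G Gᴴ F` be the residual of `F` after
projection onto the column space of `G`. By Pythagoras `‖E‖² = ‖F‖² - ‖Gᴴ F‖² = r - ‖Fᴴ G‖²` in the
Frobenius norm. For every vector `w`, `Eᴴ w` is the difference of `Fᴴ w` and `(Fᴴ G) (Gᴴ w)`; since
`Fᴴ G` is a contraction, `‖Fᴴ w‖ - ‖Gᴴ w‖ ≤ ‖Eᴴ w‖ ≤ ‖E‖ ‖w‖`. Exchanging `F` and `G` bounds the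
opposite difference.
-/

open WithLp (toLp)

variable {𝕜 m n k : Type*} [RCLike 𝕜] [Fintype m] [Fintype k]

theorem conjTranspose_mul_self_sub_projection {R : Type*} [Ring R] [StarRing R] [DecidableEq k]
    (F : Matrix m n R) {G : Matrix m k R} (hG : Gᴴ * G = 1) :
    (F - G * (Gᴴ * F))ᴴ * (F - G * (Gᴴ * F)) = Fᴴ * F - (Gᴴ * F)ᴴ * (Gᴴ * F) := by
  have horth : Gᴴ * (F - G * (Gᴴ * F)) = 0 := by
    rw [Matrix.mul_sub, ← Matrix.mul_assoc, hG, Matrix.one_mul, sub_self]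
  calc (F - G * (Gᴴ * F))ᴴ * (F - G * (Gᴴ * F))
      = Fᴴ * (F - G * (Gᴴ * F)) - (Gᴴ * F)ᴴ * (Gᴴ * (F - G * (Gᴴ * F))) := by
        rw [conjTranspose_sub, conjTranspose_mul G, Matrix.sub_mul, Matrix.mul_assoc _ Gᴴ]
    _ = Fᴴ * F - (Gᴴ * F)ᴴ * (Gᴴ * F) := by
        rw [horth, Matrix.mul_zero, sub_zero, Matrix.mul_sub, conjTranspose_mul Gᴴ,
          conjTranspose_conjTranspose, Matrix.mul_assoc Fᴴ]

variable [Fintype n]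

section L2Operator

open scoped Matrix.Norms.L2Operator

variable [DecidableEq n] [DecidableEq k]

theorem l2_opNorm_le_one_of_conjTranspose_mul_self_eq_one {F : Matrix m n 𝕜} (hF : Fᴴ * F = 1) :
    ‖F‖ ≤ 1 := by
  have hsq : ‖F‖ * ‖F‖ ≤ 1 := by
    rw [← l2_opNorm_conjTranspose_mul_self, hF, ← diagonal_one, l2_opNorm_diagonal]
    exact (pi_norm_le_iff_of_nonneg zero_le_one).2 fun _ => norm_one.le
  exact (le_abs_self _).trans (abs_le_one_iff_mul_self_le_one.2 hsq)

theorem norm_conjTranspose_mul_mulVec_le {F : Matrix m n 𝕜} {G : Matrix m k 𝕜}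
    (hF : Fᴴ * F = 1) (hG : Gᴴ * G = 1) (x : k → 𝕜) :
    ‖toLp 2 ((Fᴴ * G) *ᵥ x)‖ ≤ ‖toLp 2 x‖ := by
  classical
  have hFG : ‖Fᴴ * G‖ ≤ 1 := calc
    ‖Fᴴ * G‖ ≤ ‖Fᴴ‖ * ‖G‖ := l2_opNorm_mul _ _
    _ ≤ 1 := by
      rw [l2_opNorm_conjTranspose]
      exact mul_le_one₀ (l2_opNorm_le_one_of_conjTranspose_mul_self_eq_one hF) (norm_nonneg G)
        (l2_opNorm_le_one_of_conjTranspose_mul_self_eq_one hG)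
  exact (l2_opNorm_mulVec (Fᴴ * G) (toLp 2 x)).trans (mul_le_of_le_one_left (norm_nonneg _) hFG)

end L2Operator

section Frobenius

open scoped Matrix.Norms.Frobenius

theorem frobNorm_eq_frobenius_norm (M : Matrix m n ℝ) : frobNorm M = ‖M‖ := by
  simp only [frobNorm, frobenius_norm_def, Real.sqrt_eq_rpow, Real.rpow_two, Real.norm_eq_abs,
    sq_abs]

theorem frobenius_norm_sq_eq_re_trace (A : Matrix m n 𝕜) :
    ‖A‖ ^ 2 = RCLike.re (Aᴴ * A).trace := by
  have hsq : ‖A‖ ^ 2 = ∑ i, ∑ j, ‖A i j‖ ^ 2 := by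
    simp only [frobenius_norm_def, ← Real.sqrt_eq_rpow, Real.rpow_two]
    exact Real.sq_sqrt (by positivity)
  rw [hsq, Finset.sum_comm]
  simp only [trace, diag_apply, mul_apply, conjTranspose_apply, map_sum, RCLike.star_def,
    RCLike.conj_mul, ← RCLike.ofReal_pow, RCLike.ofReal_re]

theorem norm_mulVec_le_frobenius_norm_mul (A : Matrix m n 𝕜) (x : n → 𝕜) :
    ‖toLp 2 (A *ᵥ x)‖ ≤ ‖A‖ * ‖toLp 2 x‖ := by
  simpa only [← replicateCol_mulVec, frobenius_norm_replicateCol] using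
    frobenius_norm_mul A (replicateCol Unit x)

theorem frobenius_norm_sq_of_conjTranspose_mul_self_eq_one [DecidableEq n] {F : Matrix m n 𝕜}
    (hF : Fᴴ * F = 1) : ‖F‖ ^ 2 = Fintype.card n := by
  rw [frobenius_norm_sq_eq_re_trace, hF, trace_one, RCLike.natCast_re]

theorem frobenius_norm_sq_sub_projection [DecidableEq k] (F : Matrix m n 𝕜) {G : Matrix m k 𝕜}
    (hG : Gᴴ * G = 1) : ‖F - G * (Gᴴ * F)‖ ^ 2 = ‖F‖ ^ 2 - ‖Gᴴ * F‖ ^ 2 := by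
  simp only [frobenius_norm_sq_eq_re_trace, conjTranspose_mul_self_sub_projection F hG, trace_sub,
    map_sub]

theorem frobenius_norm_conjTranspose_mul_comm (F : Matrix m n 𝕜) (G : Matrix m k 𝕜) :
    ‖Gᴴ * F‖ = ‖Fᴴ * G‖ := by
  rw [← frobenius_norm_conjTranspose, conjTranspose_mul, conjTranspose_conjTranspose]

variable [DecidableEq n] [DecidableEq k]

theorem norm_conjTranspose_mulVec_sub_le {F : Matrix m n 𝕜} {G : Matrix m k 𝕜}
    (hF : Fᴴ * F = 1) (hG : Gᴴ * G = 1) (w : m → 𝕜) :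
    ‖toLp 2 (Fᴴ *ᵥ w)‖ - ‖toLp 2 (Gᴴ *ᵥ w)‖ ≤ ‖F - G * (Gᴴ * F)‖ * ‖toLp 2 w‖ := by
  classical
  have hresidual : (F - G * (Gᴴ * F))ᴴ *ᵥ w = Fᴴ *ᵥ w - (Fᴴ * G) *ᵥ (Gᴴ *ᵥ w) := by
    simp only [conjTranspose_sub, conjTranspose_mul, conjTranspose_conjTranspose, sub_mulVec,
      mulVec_mulVec]
  calc ‖toLp 2 (Fᴴ *ᵥ w)‖ - ‖toLp 2 (Gᴴ *ᵥ w)‖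
      ≤ ‖toLp 2 (Fᴴ *ᵥ w)‖ - ‖toLp 2 ((Fᴴ * G) *ᵥ (Gᴴ *ᵥ w))‖ :=
        sub_le_sub_left (norm_conjTranspose_mul_mulVec_le hF hG _) _
    _ ≤ ‖toLp 2 ((F - G * (Gᴴ * F))ᴴ *ᵥ w)‖ := by
        rw [hresidual, WithLp.toLp_sub]
        exact norm_sub_norm_le _ _
    _ ≤ ‖F - G * (Gᴴ * F)‖ * ‖toLp 2 w‖ := by
        rw [← frobenius_norm_conjTranspose (F - _)]
        exact norm_mulVec_le_frobenius_norm_mul _ w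

theorem sq_norm_conjTranspose_mulVec_sub_le_of_le {F : Matrix m n 𝕜} {G : Matrix m k 𝕜}
    (hF : Fᴴ * F = 1) (hG : Gᴴ * G = 1) (w : m → 𝕜)
    (hle : ‖toLp 2 (Gᴴ *ᵥ w)‖ ≤ ‖toLp 2 (Fᴴ *ᵥ w)‖) :
    (‖toLp 2 (Fᴴ *ᵥ w)‖ - ‖toLp 2 (Gᴴ *ᵥ w)‖) ^ 2 ≤
      (Fintype.card n - ‖Fᴴ * G‖ ^ 2) * ‖toLp 2 w‖ ^ 2 := by
  calc (‖toLp 2 (Fᴴ *ᵥ w)‖ - ‖toLp 2 (Gᴴ *ᵥ w)‖) ^ 2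
      ≤ (‖F - G * (Gᴴ * F)‖ * ‖toLp 2 w‖) ^ 2 :=
        pow_le_pow_left₀ (sub_nonneg.2 hle) (norm_conjTranspose_mulVec_sub_le hF hG w) 2
    _ = (Fintype.card n - ‖Fᴴ * G‖ ^ 2) * ‖toLp 2 w‖ ^ 2 := by
        rw [mul_pow, frobenius_norm_sq_sub_projection F hG,
          frobenius_norm_sq_of_conjTranspose_mul_self_eq_one hF,
          frobenius_norm_conjTranspose_mul_comm]

theorem stmt6_general {F : Matrix m n 𝕜} {G : Matrix m k 𝕜}
    (hF : Fᴴ * F = 1) (hG : Gᴴ * G = 1) (w : m → 𝕜) :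
    (‖toLp 2 (Fᴴ *ᵥ w)‖ - ‖toLp 2 (Gᴴ *ᵥ w)‖) ^ 2 ≤
      (max (Fintype.card n : ℝ) (Fintype.card k) - ‖Fᴴ * G‖ ^ 2) * ‖toLp 2 w‖ ^ 2 := by
  rcases le_total ‖toLp 2 (Gᴴ *ᵥ w)‖ ‖toLp 2 (Fᴴ *ᵥ w)‖ with hGF | hFG
  · refine (sq_norm_conjTranspose_mulVec_sub_le_of_le hF hG w hGF).trans ?_
    gcongr
    exact le_max_left _ _
  · rw [sub_sq_comm, ← frobenius_norm_conjTranspose_mul_comm]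
    refine (sq_norm_conjTranspose_mulVec_sub_le_of_le hG hF w hFG).trans ?_
    gcongr
    exact le_max_right _ _

end Frobenius

theorem sqrt_sum_sq_row_eq_norm_conjTranspose_mulVec_single [DecidableEq m] (F : Matrix m n ℝ)
    (i : m) : √(∑ j, F i j ^ 2) = ‖toLp 2 (Fᴴ *ᵥ Pi.single i 1)‖ := by
  simp [EuclideanSpace.norm_eq]

/-- norm discrepancy lemma — for F, G with orthonormal columns,
‖FᵀG‖_F² ≤ r − (‖u‖ − ‖v‖)², where u, v are the first rows of F and G. -/
theorem stmt6 (p r : ℕ) (hr : 0 < r) (hrp : r ≤ p)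
    (F G : Matrix (Fin p) (Fin r) ℝ)
    (hF : Fᵀ * F = 1) (hG : Gᵀ * G = 1) :
    frobNorm (Fᵀ * G) ^ 2 ≤
      (r : ℝ) -
        (Real.sqrt (∑ j, (F ⟨0, lt_of_lt_of_le hr hrp⟩ j) ^ 2) -
          Real.sqrt (∑ j, (G ⟨0, lt_of_lt_of_le hr hrp⟩ j) ^ 2)) ^ 2 := by
  simpa [frobNorm_eq_frobenius_norm, sqrt_sum_sq_row_eq_norm_conjTranspose_mulVec_single,
    le_sub_comm] using stmt6_general hF hG (Pi.single ⟨0, lt_of_lt_of_le hr hrp⟩ 1)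
end

section
/- (Linear programming lemma.) Let r ≥ 1 be an integer, let σ₁ ≥ σ₂ ≥ … ≥ σ_r ≥ 0 and λ₁ ≥ λ₂ ≥ … ≥ λ_r ≥ 0 be reals, and define A ∈ ℝ^{r×r} by A_{i,j} = σᵢ·λⱼ. Let γ₁, …, γ_r be reals with 0 ≤ γ_k ≤ 1/3 for all k, set γ₀ = 0, and define the set Ω = { X ∈ ℝ^{r×r} : for every 1 ≤ k ≤ r, Σ_{i=1}^r |X_{i,k}| ≤ 1, Σ_{i=1}^r |X_{k,i}| ≤ 1, and Σ_{i=1}^k Σ_{j=1}^k X_{i,j} ≤ k − γ_k }. Define X₀ ∈ ℝ^{r×r} by X₀(i,i) = 1 − γᵢ − γ_{i−1} for all i, X₀(i,i+1) = X₀(i+1,i) = γᵢ for 1 ≤ i ≤ r−1, and X₀(i,j) = 0 whenever |i−j| ≥ 2. Then X₀ ∈ Ω, and for every X ∈ Ω one has ⟨A, X⟩ ≤ ⟨A, X₀⟩, where ⟨A, X⟩ = Σ_{i,j} A_{i,j} X_{i,j}. -/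
open Matrix
open scoped BigOperators

/-- γ_{i−1}, with the convention γ₀ = 0. -/
noncomputable def gprev {r : ℕ} (γ : Fin r → ℝ) (i : Fin r) : ℝ :=
  if (i : ℕ) = 0 then 0
  else γ ⟨(i : ℕ) - 1, Nat.lt_of_le_of_lt (Nat.sub_le _ _) i.isLt⟩

/-- The tridiagonal candidate optimum X₀: diagonal entries 1 − γᵢ − γ_{i−1},
super/sub-diagonal entries γᵢ (γ indexed by the smaller of the two indices),
and 0 whenever |i − j| ≥ 2. -/
noncomputable def X0 {r : ℕ} (γ : Fin r → ℝ) : Matrix (Fin r) (Fin r) ℝ :=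
  Matrix.of fun i j =>
    if (i : ℕ) = (j : ℕ) then 1 - γ i - gprev γ i
    else if (j : ℕ) = (i : ℕ) + 1 then γ i
    else if (i : ℕ) = (j : ℕ) + 1 then γ j
    else 0

/-- The feasible set Ω of the linear program. -/
def OmegaLP (r : ℕ) (γ : Fin r → ℝ) : Set (Matrix (Fin r) (Fin r) ℝ) :=
  {X | ∀ k : Fin r,
    (∑ i, |X i k|) ≤ 1 ∧ (∑ i, |X k i|) ≤ 1 ∧
    (∑ i ∈ Finset.Iic k, ∑ j ∈ Finset.Iic k, X i j) ≤ ((k : ℕ) + 1 : ℝ) - γ k}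

/-!
Summing by parts in both indices writes `⟨A, X⟩` as a nonnegative combination of the sums of `X`
over the leading rectangles `{1, …, a} × {1, …, b}`. On `Ω` such a sum is at most `min a b`, by the
bounds on rows and columns, and at most `a - γ_a` when `a = b`. All these bounds are attained at
once by `X₀`.
-/

section LeadingSum

open Finset

-- For the greatest index `a`, write `f = (f - f a) + f a`: the first part vanishes at `a`.
lemma sum_smul_le_sum_smul_of_partial_sums_le {ι R M : Type*} [LinearOrder ι]
    [Ring R] [PartialOrder R] [IsOrderedAddMonoid R]
    [AddCommGroup M] [PartialOrder M] [IsOrderedAddMonoid M] [Module R M] [PosSMulMono R M]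
    (s : Finset ι) {f : ι → R} {u v : ι → M} (hf : AntitoneOn f s) (hf0 : ∀ i ∈ s, 0 ≤ f i)
    (huv : ∀ a ∈ s, ∑ i ∈ s with i ≤ a, u i ≤ ∑ i ∈ s with i ≤ a, v i) :
    ∑ i ∈ s, f i • u i ≤ ∑ i ∈ s, f i • v i := by
  induction s using Finset.induction_on_max generalizing f with
  | empty => simp
  | insert a s ha ih =>
    have split_top (w : ι → M) : ∑ i ∈ insert a s, f i • w i =
        ∑ i ∈ s, (f i - f a) • w i + f a • ∑ i ∈ insert a s, w i := by
      have ha_notMem : a ∉ s := fun h => (ha a h).false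
      simp only [sum_insert ha_notMem, sub_smul, sum_sub_distrib, smul_add, smul_sum]
      abel
    have below_top : ∀ b ∈ s, {i ∈ insert a s | i ≤ b} = {i ∈ s | i ≤ b} := fun b hb => by
      rw [filter_insert, if_neg (ha b hb).not_ge]
    have all_le_top : {i ∈ insert a s | i ≤ a} = insert a s := by
      refine filter_true_of_mem fun i hi => ?_
      rcases mem_insert.1 hi with rfl | hi
      exacts [le_rfl, (ha i hi).le]
    have htotal := huv a (mem_insert_self a s)
    rw [all_le_top] at htotal
    rw [split_top u, split_top v]
    refine add_le_add (ih (fun i hi j hj hij => ?_) (fun i hi => ?_) fun b hb => ?_)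
      (smul_le_smul_of_nonneg_left htotal (hf0 a (mem_insert_self a s)))
    · exact sub_le_sub_right (hf (mem_insert_of_mem hi) (mem_insert_of_mem hj) hij) _
    · exact sub_nonneg.2 (hf (mem_insert_of_mem hi) (mem_insert_self a s) (ha i hi).le)
    · simpa only [below_top b hb] using huv b (mem_insert_of_mem hb)

/-- The sum of the entries of `X` over the rectangle of all positions `(i, j)` with `i ≤ a` and
`j ≤ b`; the inequalities `∑_{i ≤ k} ∑_{j ≤ k} X i j ≤ k - γ_k` of the linear program bound it for
`a = b`. -/
def leadingSum {m n α : Type*} [Preorder m] [LocallyFiniteOrderBot m] [Preorder n]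
    [LocallyFiniteOrderBot n] [AddCommMonoid α] (X : Matrix m n α) (a : m) (b : n) : α :=
  ∑ i ∈ Iic a, ∑ j ∈ Iic b, X i j

lemma leadingSum_transpose {m n α : Type*} [Preorder m] [LocallyFiniteOrderBot m] [Preorder n]
    [LocallyFiniteOrderBot n] [AddCommMonoid α] (X : Matrix m n α) (a : m) (b : n) :
    leadingSum Xᵀ b a = leadingSum X a b :=
  sum_comm

lemma leadingSum_le_card_Iic {m n α : Type*} [Preorder m] [LocallyFiniteOrderBot m] [Preorder n]
    [LocallyFiniteOrderBot n] [Fintype n] [Ring α] [LinearOrder α] [IsOrderedRing α]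
    {X : Matrix m n α} (hX : ∀ i, ∑ j, |X i j| ≤ 1) (a : m) (b : n) :
    leadingSum X a b ≤ #(Iic a) := by
  have partial_row_le_one (i : m) : ∑ j ∈ Iic b, X i j ≤ 1 :=
    calc ∑ j ∈ Iic b, X i j ≤ ∑ j ∈ Iic b, |X i j| := sum_le_sum fun j _ => le_abs_self _
      _ ≤ ∑ j, |X i j| := sum_le_univ_sum_of_nonneg fun j => abs_nonneg _
      _ ≤ 1 := hX i
  simpa [leadingSum] using sum_le_card_nsmul (Iic a) _ 1 fun i _ => partial_row_le_one i

lemma frobInner_vecMulVec_le_of_leadingSum_le {m n : Type*}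
    [Fintype m] [LinearOrder m] [LocallyFiniteOrderBot m]
    [Fintype n] [LinearOrder n] [LocallyFiniteOrderBot n]
    {σ : m → ℝ} {lam : n → ℝ} (hσ : Antitone σ) (hσ0 : ∀ i, 0 ≤ σ i)
    (hlam : Antitone lam) (hlam0 : ∀ j, 0 ≤ lam j) {X Y : Matrix m n ℝ}
    (hXY : ∀ a b, leadingSum X a b ≤ leadingSum Y a b) :
    frobInner (vecMulVec σ lam) X ≤ frobInner (vecMulVec σ lam) Y := by
  have frobInner_eq (Z : Matrix m n ℝ) :
      frobInner (vecMulVec σ lam) Z = ∑ i, σ i • ∑ j, lam j • Z i j := by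
    simp only [frobInner, vecMulVec_apply, smul_eq_mul, mul_sum, mul_assoc]
  have sum_Iic_rows (Z : Matrix m n ℝ) (a : m) :
      ∑ i ∈ Iic a, ∑ j, lam j • Z i j = ∑ j, lam j • ∑ i ∈ Iic a, Z i j := by
    simp only [smul_sum]
    exact sum_comm
  rw [frobInner_eq, frobInner_eq]
  refine sum_smul_le_sum_smul_of_partial_sums_le univ (hσ.antitoneOn _) (fun i _ => hσ0 i)
    fun a _ => ?_
  rw [filter_ge_eq_Iic, sum_Iic_rows, sum_Iic_rows]
  refine sum_smul_le_sum_smul_of_partial_sums_le univ (hlam.antitoneOn _) (fun j _ => hlam0 j)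
    fun b _ => ?_
  rw [filter_ge_eq_Iic, sum_comm (s := Iic b), sum_comm (s := Iic b)]
  exact hXY a b

end LeadingSum

section X0

open Finset

variable {r : ℕ}

lemma X0_isSymm (γ : Fin r → ℝ) : (X0 γ).IsSymm := by
  ext i j
  simp only [X0, transpose_apply, of_apply]
  split_ifs with hji <;> first | omega | rfl | rw [Fin.ext hji]

lemma X0_nonneg {γ : Fin r → ℝ} (hγ0 : ∀ k, 0 ≤ γ k) (hγ1 : ∀ k, gprev γ k + γ k ≤ 1)
    (i j : Fin r) : 0 ≤ X0 γ i j := by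
  simp only [X0, of_apply]
  split_ifs
  · linarith [hγ1 i]
  · exact hγ0 i
  · exact hγ0 j
  · exact le_rfl

-- For `i = 0` the truncated `i - 1` is `0`, but then `gprev γ i = 0` too.
lemma X0_apply_eq_add (γ : Fin r → ℝ) (i j : Fin r) :
    X0 γ i j = (if (j : ℕ) = i then 1 - γ i - gprev γ i else 0) +
      (if (j : ℕ) = i + 1 then γ i else 0) + (if (j : ℕ) = i - 1 then gprev γ i else 0) := by
  have gprev_of_eq_zero (h : (i : ℕ) = 0) : gprev γ i = 0 := if_pos h
  have gprev_of_eq_succ (h : (i : ℕ) = j + 1) : gprev γ i = γ j := by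
    simp [gprev, h]
  simp only [X0, of_apply]
  split_ifs
  all_goals first
    | omega
    | rw [gprev_of_eq_zero (by omega)]; ring
    | rw [gprev_of_eq_succ (by omega)]; ring
    | ring

lemma sum_Iic_ite_val_eq {M : Type*} [AddCommMonoid M] (b : Fin r) (n : ℕ) (c : M) :
    ∑ j ∈ Iic b, (if (j : ℕ) = n then c else 0) = if n ≤ b then c else 0 := by
  have := sum_map (Iic b) Fin.valEmbedding fun m => if m = n then c else 0
  rw [Fin.map_valEmbedding_Iic, sum_ite_eq'] at this
  simpa using this.symm

lemma sum_Iic_X0 (γ : Fin r → ℝ) {i b : Fin r} (hib : i ≤ b) :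
    ∑ j ∈ Iic b, X0 γ i j = 1 - if i = b then γ i else 0 := by
  simp only [X0_apply_eq_add, sum_add_distrib, sum_Iic_ite_val_eq]
  rcases hib.eq_or_lt with rfl | hlt
  · simp
  · have hsucc : (i : ℕ) + 1 ≤ b := hlt
    have hpred : (i : ℕ) - 1 ≤ b := by omega
    rw [if_pos (Fin.le_def.1 hib), if_pos hsucc, if_pos hpred, if_neg hlt.ne]
    ring

lemma sum_abs_X0_le_one {γ : Fin r → ℝ} (hγ0 : ∀ k, 0 ≤ γ k) (hγ1 : ∀ k, gprev γ k + γ k ≤ 1)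
    (i : Fin r) : ∑ j, |X0 γ i j| ≤ 1 := by
  have : NeZero r := ⟨i.pos.ne'⟩
  simp only [abs_of_nonneg (X0_nonneg hγ0 hγ1 _ _)]
  rw [← Iic_top, sum_Iic_X0 γ le_top, sub_le_self_iff]
  split_ifs
  exacts [hγ0 i, le_rfl]

lemma leadingSum_X0_of_le (γ : Fin r → ℝ) {a b : Fin r} (hab : a ≤ b) :
    leadingSum (X0 γ) a b = (a : ℕ) + 1 - if a = b then γ a else 0 := by
  have sum_rows : leadingSum (X0 γ) a b = ∑ i ∈ Iic a, (1 - if i = b then γ i else 0) :=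
    sum_congr rfl fun i hi => sum_Iic_X0 γ ((mem_Iic.1 hi).trans hab)
  rw [sum_rows, sum_sub_distrib, sum_ite_eq']
  rcases hab.eq_or_lt with rfl | hlt
  · simp
  · simp [hlt.ne, hlt.not_ge]

lemma X0_mem_OmegaLP {γ : Fin r → ℝ} (hγ0 : ∀ k, 0 ≤ γ k) (hγ1 : ∀ k, gprev γ k + γ k ≤ 1) :
    X0 γ ∈ OmegaLP r γ := by
  refine fun k => ⟨?_, sum_abs_X0_le_one hγ0 hγ1 k, ?_⟩
  · simpa only [(X0_isSymm γ).apply] using sum_abs_X0_le_one hγ0 hγ1 k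
  · simpa [leadingSum] using (leadingSum_X0_of_le γ (le_refl k)).le

lemma leadingSum_le_leadingSum_X0 {γ : Fin r → ℝ} {X : Matrix (Fin r) (Fin r) ℝ}
    (hX : X ∈ OmegaLP r γ) (a b : Fin r) : leadingSum X a b ≤ leadingSum (X0 γ) a b := by
  rcases lt_trichotomy a b with hab | rfl | hba
  · rw [leadingSum_X0_of_le γ hab.le, if_neg hab.ne]
    simpa using leadingSum_le_card_Iic (fun i => (hX i).2.1) a b
  · rw [leadingSum_X0_of_le γ le_rfl, if_pos rfl]
    exact (hX a).2.2
  · rw [← leadingSum_transpose X, ← leadingSum_transpose (X0 γ), X0_isSymm,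
      leadingSum_X0_of_le γ hba.le, if_neg hba.ne]
    simpa using leadingSum_le_card_Iic (X := Xᵀ) (fun i => (hX i).1) b a

lemma gprev_le {γ : Fin r → ℝ} {c : ℝ} (hc : 0 ≤ c) (hγ : ∀ k, γ k ≤ c) (k : Fin r) :
    gprev γ k ≤ c := by
  unfold gprev
  split_ifs
  exacts [hc, hγ _]

end X0

theorem stmt10_general {r : ℕ} {σ lam : Fin r → ℝ}
    (hσ : Antitone σ) (hσ0 : ∀ i, 0 ≤ σ i) (hlam : Antitone lam) (hlam0 : ∀ i, 0 ≤ lam i)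
    {γ : Fin r → ℝ} (hγ0 : ∀ k, 0 ≤ γ k) (hγ1 : ∀ k, gprev γ k + γ k ≤ 1) :
    X0 γ ∈ OmegaLP r γ ∧ ∀ X ∈ OmegaLP r γ,
      frobInner (vecMulVec σ lam) X ≤ frobInner (vecMulVec σ lam) (X0 γ) :=
  ⟨X0_mem_OmegaLP hγ0 hγ1, fun _ hX =>
    frobInner_vecMulVec_le_of_leadingSum_le hσ hσ0 hlam hlam0 (leadingSum_le_leadingSum_X0 hX)⟩

/-- the linear programming lemma — X₀ is feasible and maximizes
⟨A, X⟩ over Ω, where A_{i,j} = σᵢ λⱼ with nonincreasing nonnegative σ, λ and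
0 ≤ γ_k ≤ 1/3. -/
theorem stmt10 (r : ℕ) (hr : 0 < r)
    (σ lam : Fin r → ℝ)
    (hσa : Antitone σ) (hσ0 : ∀ i, 0 ≤ σ i)
    (hla : Antitone lam) (hl0 : ∀ i, 0 ≤ lam i)
    (γ : Fin r → ℝ) (hγ0 : ∀ k, 0 ≤ γ k) (hγ3 : ∀ k, γ k ≤ 1 / 3)
    (A : Matrix (Fin r) (Fin r) ℝ) (hA : ∀ i j, A i j = σ i * lam j) :
    X0 γ ∈ OmegaLP r γ ∧
      ∀ X ∈ OmegaLP r γ, frobInner A X ≤ frobInner A (X0 γ) := by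
  obtain rfl : A = vecMulVec σ lam := Matrix.ext hA
  exact stmt10_general hσa hσ0 hla hl0 hγ0 fun k => by
    linarith [gprev_le (by norm_num) hγ3 k, hγ3 k]
end

section
/- Let p > r ≥ 1 be integers and let U, L ∈ O_{p,r} with first rows Uᵀe₁ = a·e₁ and Lᵀe₁ = b·e₁ for reals a, b with a² < 1. Let s = UᵀL e₁ ∈ ℝʳ (the first column of UᵀL). Then (s₁ − ab)²/(1 − a²) + Σ_{i=2}^{r} sᵢ² ≤ 1 − b²; that is, the first column of UᵀL lies in the ellipsoid ℰ_r = { s ∈ ℝʳ : (s₁ − ab)²/(1−a²) + Σ_{i=2}^r sᵢ² ≤ 1 − b² }. -/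
open Matrix
open scoped BigOperators RealInnerProductSpace

/-!
For a unit vector `e` let `v i` be the component of `u i` orthogonal to `e`. If at most one member of
the orthonormal family `u` fails to be orthogonal to `e`, the `v i` are still pairwise orthogonal,
with `‖v i‖ ^ 2 = 1 - |⟪e, u i⟫| ^ 2`. The inequality is Bessel's inequality for the family `v` at
the component of `x` orthogonal to `e`, whose squared norm is `‖x‖ ^ 2 - |⟪e, x⟫| ^ 2`. For the
ellipsoid, `u` is the family of columns of `U`, `e` the first basis vector and `x` the first column
of `L`.
-/

section InnerProductSpace

open scoped InnerProductSpace

variable {𝕜 E ι : Type*} [RCLike 𝕜] [NormedAddCommGroup E] [InnerProductSpace 𝕜 E]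

theorem sum_norm_inner_sq_div_norm_sq_le {v : ι → E} (hv : Pairwise fun i j => ⟪v i, v j⟫_𝕜 = 0)
    (hv₀ : ∀ i, v i ≠ 0) (s : Finset ι) (x : E) :
    ∑ i ∈ s, ‖⟪v i, x⟫_𝕜‖ ^ 2 / ‖v i‖ ^ 2 ≤ ‖x‖ ^ 2 := by
  have hw : Orthonormal 𝕜 fun i => (‖v i‖ : 𝕜)⁻¹ • v i :=
    ⟨fun i => norm_smul_inv_norm (hv₀ i), fun i j hij => by
      simp only [inner_smul_left, inner_smul_right, hv hij, mul_zero]⟩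
  simpa [inner_smul_left, mul_pow, div_eq_inv_mul] using hw.sum_inner_products_le x (s := s)

variable {e : E}

theorem inner_sub_inner_smul_sub_inner_smul (he : ‖e‖ = 1) (x y : E) :
    ⟪x - ⟪e, x⟫_𝕜 • e, y - ⟪e, y⟫_𝕜 • e⟫_𝕜 = ⟪x, y⟫_𝕜 - ⟪x, e⟫_𝕜 * ⟪e, y⟫_𝕜 := by
  have hee : ⟪e, e⟫_𝕜 = 1 := inner_self_eq_one_of_norm_eq_one he
  simp only [inner_sub_left, inner_sub_right, inner_smul_left, inner_smul_right, inner_conj_symm,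
    hee]
  ring

theorem norm_sub_inner_smul_sq (he : ‖e‖ = 1) (x : E) :
    ‖x - ⟪e, x⟫_𝕜 • e‖ ^ 2 = ‖x‖ ^ 2 - ‖⟪e, x⟫_𝕜‖ ^ 2 := by
  have h := congrArg RCLike.re (inner_sub_inner_smul_sub_inner_smul (𝕜 := 𝕜) he x x)
  rwa [map_sub, inner_self_eq_norm_sq, inner_self_eq_norm_sq, inner_mul_symm_re_eq_norm, norm_mul,
    norm_inner_symm x e, ← sq] at h

theorem sum_norm_inner_sub_sq_div_le_of_orthonormal {u : ι → E} (hu : Orthonormal 𝕜 u)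
    (he : ‖e‖ = 1) (hue : Pairwise fun i j => ⟪u i, e⟫_𝕜 * ⟪e, u j⟫_𝕜 = 0)
    (hlt : ∀ i, ‖⟪e, u i⟫_𝕜‖ < 1) (s : Finset ι) (x : E) :
    ∑ i ∈ s, ‖⟪u i, x⟫_𝕜 - ⟪u i, e⟫_𝕜 * ⟪e, x⟫_𝕜‖ ^ 2 / (1 - ‖⟪e, u i⟫_𝕜‖ ^ 2) ≤
      ‖x‖ ^ 2 - ‖⟪e, x⟫_𝕜‖ ^ 2 := by
  have hnorm (i : ι) : ‖u i - ⟪e, u i⟫_𝕜 • e‖ ^ 2 = 1 - ‖⟪e, u i⟫_𝕜‖ ^ 2 := by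
    rw [norm_sub_inner_smul_sq he, hu.1 i, one_pow]
  have hne (i : ι) : u i - ⟪e, u i⟫_𝕜 • e ≠ 0 := fun h => by
    have hpos : 0 < 1 - ‖⟪e, u i⟫_𝕜‖ ^ 2 :=
      sub_pos.2 (pow_lt_one₀ (norm_nonneg _) (hlt i) two_ne_zero)
    simp [← hnorm i, h] at hpos
  have horth : Pairwise fun i j => ⟪u i - ⟪e, u i⟫_𝕜 • e, u j - ⟪e, u j⟫_𝕜 • e⟫_𝕜 = 0 :=
    fun i j hij => by
      beta_reduce
      rw [inner_sub_inner_smul_sub_inner_smul he, hu.2 hij, hue hij, sub_zero]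
  simpa only [inner_sub_inner_smul_sub_inner_smul he, hnorm, norm_sub_inner_smul_sq he] using
    sum_norm_inner_sq_div_norm_sq_le horth hne s (x - ⟪e, x⟫_𝕜 • e)

end InnerProductSpace

section Matrix

variable {𝕜 m n : Type*} [RCLike 𝕜] [Fintype m] [DecidableEq n]

theorem orthonormal_toLp_col_of_conjTranspose_mul_self_eq_one {U : Matrix m n 𝕜} (hU : Uᴴ * U = 1) :
    Orthonormal 𝕜 fun j => WithLp.toLp 2 (U.col j) := by
  rw [← gram_eq_one_iff_orthonormal, ← hU]
  ext i j
  simp [gram_apply, EuclideanSpace.inner_toLp_toLp, mul_apply, dotProduct, mul_comm]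

theorem sum_norm_sq_col_eq_one_of_conjTranspose_mul_self_eq_one {U : Matrix m n 𝕜}
    (hU : Uᴴ * U = 1) (j : n) : ∑ i, ‖U i j‖ ^ 2 = 1 := by
  have hnorm := (orthonormal_toLp_col_of_conjTranspose_mul_self_eq_one hU).norm_eq_one j
  simpa [hnorm] using (EuclideanSpace.norm_sq_eq (WithLp.toLp 2 (U.col j))).symm

theorem sum_norm_conjTranspose_mulVec_sub_sq_div_le {U : Matrix m n 𝕜} (hU : Uᴴ * U = 1) {q : m}
    (hpair : Pairwise fun i j => star (U q i) * U q j = 0) (hlt : ∀ j, ‖U q j‖ < 1)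
    (s : Finset n) (l : m → 𝕜) :
    ∑ i ∈ s, ‖(Uᴴ *ᵥ l) i - star (U q i) * l q‖ ^ 2 / (1 - ‖U q i‖ ^ 2) ≤
      ∑ k, ‖l k‖ ^ 2 - ‖l q‖ ^ 2 := by
  classical
  let u : n → EuclideanSpace 𝕜 m := fun j => WithLp.toLp 2 (U.col j)
  let e : EuclideanSpace 𝕜 m := EuclideanSpace.single q 1
  let x : EuclideanSpace 𝕜 m := WithLp.toLp 2 l
  have he : ‖e‖ = 1 := by simp [e]
  have hey (y : EuclideanSpace 𝕜 m) : inner 𝕜 e y = y q := by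
    simp [e, EuclideanSpace.inner_single_left]
  have hue (j : n) : inner 𝕜 (u j) e = star (U q j) := by
    simp [e, u, EuclideanSpace.inner_single_right]
  have hux (j : n) : inner 𝕜 (u j) x = (Uᴴ *ᵥ l) j := by
    simp [u, x, EuclideanSpace.inner_toLp_toLp, mulVec, dotProduct, mul_comm]
  have hbessel := sum_norm_inner_sub_sq_div_le_of_orthonormal
    (orthonormal_toLp_col_of_conjTranspose_mul_self_eq_one hU) he
    (by simpa only [u, hue, hey, col_apply] using hpair)
    (by simpa only [hey, col_apply] using hlt) s x
  simpa only [u, hue, hux, hey, x, col_apply, EuclideanSpace.norm_sq_eq] using hbessel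

theorem stmt11_general [Fintype n] (U : Matrix m n 𝕜) (hU : Uᴴ * U = 1) (l : m → 𝕜)
    (q : m) (z : n) (a : 𝕜) (ha : ‖a‖ < 1) (hrow : ∀ j, U q j = if j = z then a else 0) :
    ‖(Uᴴ *ᵥ l) z - star a * l q‖ ^ 2 / (1 - ‖a‖ ^ 2) +
        ∑ i ∈ Finset.univ.erase z, ‖(Uᴴ *ᵥ l) i‖ ^ 2 ≤
      ∑ k, ‖l k‖ ^ 2 - ‖l q‖ ^ 2 := by
  have hz : U q z = a := by simp [hrow]
  have hne {j : n} (hj : j ≠ z) : U q j = 0 := by simp [hrow, hj]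
  have hpair : Pairwise fun i j => star (U q i) * U q j = 0 := fun i j hij => by
    rcases eq_or_ne i z with rfl | hi
    · simp [hne hij.symm]
    · simp [hne hi]
  have hlt (j : n) : ‖U q j‖ < 1 := by
    rcases eq_or_ne j z with rfl | hj
    · rwa [hz]
    · simp [hne hj]
  have hsum := sum_norm_conjTranspose_mulVec_sub_sq_div_le hU hpair hlt Finset.univ l
  rw [← Finset.add_sum_erase _ _ (Finset.mem_univ z), hz] at hsum
  have herase : ∀ i ∈ Finset.univ.erase z,
      ‖(Uᴴ *ᵥ l) i - star (U q i) * l q‖ ^ 2 / (1 - ‖U q i‖ ^ 2) = ‖(Uᴴ *ᵥ l) i‖ ^ 2 :=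
    fun i hi => by simp [hne (Finset.ne_of_mem_erase hi)]
  rwa [Finset.sum_congr rfl herase] at hsum

end Matrix

/-- the first column of UᵀL lies in the ellipsoid ℰ_r when the
first rows of U and L are a·e₁ and b·e₁. -/
theorem stmt11 (p r : ℕ) (hr : 0 < r) (hrp : r < p)
    (U L : Matrix (Fin p) (Fin r) ℝ)
    (hUo : Uᵀ * U = 1) (hLo : Lᵀ * L = 1)
    (a b : ℝ) (ha : a ^ 2 < 1)
    (hUrow : ∀ j : Fin r, U ⟨0, hr.trans hrp⟩ j = if j = ⟨0, hr⟩ then a else 0)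
    (hLrow : ∀ j : Fin r, L ⟨0, hr.trans hrp⟩ j = if j = ⟨0, hr⟩ then b else 0) :
    ((Uᵀ * L) ⟨0, hr⟩ ⟨0, hr⟩ - a * b) ^ 2 / (1 - a ^ 2) +
        (∑ i ∈ Finset.univ.erase (⟨0, hr⟩ : Fin r), ((Uᵀ * L) i ⟨0, hr⟩) ^ 2) ≤
      1 - b ^ 2 := by
  have hcol : ∑ k, L k ⟨0, hr⟩ ^ 2 = 1 := by
    simpa using sum_norm_sq_col_eq_one_of_conjTranspose_mul_self_eq_one hLo ⟨0, hr⟩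
  simpa [mulVec, mul_apply, dotProduct, hLrow, hcol] using
    stmt11_general U hUo (L.col ⟨0, hr⟩) ⟨0, hr.trans hrp⟩ ⟨0, hr⟩ a
      ((sq_lt_one_iff_abs_lt_one a).1 ha) hUrow
end

section
/- For all real numbers a, b, λ with 0 ≤ a ≤ b ≤ 1 and 0 ≤ λ ≤ 1, one has 1 − ( a·b + √( (1−a²)(1−b²) + λ²(1−b²) ) ) / √(1+λ²) ≥ (a − b)²/4. -/
/-!
Put `c = a / √(1 + λ²)`. The quotient in the theorem equals `c b + √((1 - c²)(1 - b²))`, which is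
`cos (θ - φ)` for `c = cos θ` and `b = cos φ` with `θ, φ ∈ [0, π / 2]`. The AM-GM inequality bounds
the root by `1 - (c² + b²) / 2`, so the quotient is at most `1 - (c - b)² / 2`. Since `c ≤ a ≤ b`,
replacing `c` by `a` only decreases `(c - b)²`.
-/

lemma sqrt_mul_le_half_add {u v : ℝ} (hu : 0 ≤ u) (hv : 0 ≤ v) : √(u * v) ≤ (u + v) / 2 := by
  lift u to NNReal using hu
  lift v to NNReal using hv
  rw [← NNReal.coe_mul, ← Real.coe_sqrt]
  exact_mod_cast NNReal.sqrt_mul_le_half_add u v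

lemma half_sq_sub_le_one_sub_mul_add_sqrt {x y : ℝ} (hx : x ^ 2 ≤ 1) (hy : y ^ 2 ≤ 1) :
    (x - y) ^ 2 / 2 ≤ 1 - (x * y + √((1 - x ^ 2) * (1 - y ^ 2))) := by
  linarith [sqrt_mul_le_half_add (sub_nonneg.2 hx) (sub_nonneg.2 hy)]

lemma mul_add_sqrt_div_sqrt_one_add_sq (a b lam : ℝ) :
    (a * b + √((1 - a ^ 2) * (1 - b ^ 2) + lam ^ 2 * (1 - b ^ 2))) / √(1 + lam ^ 2) =
      a / √(1 + lam ^ 2) * b + √((1 - (a / √(1 + lam ^ 2)) ^ 2) * (1 - b ^ 2)) := by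
  have hpos : 0 < 1 + lam ^ 2 := by positivity
  have hradicand : ((1 - a ^ 2) * (1 - b ^ 2) + lam ^ 2 * (1 - b ^ 2)) / (1 + lam ^ 2) =
      (1 - (a / √(1 + lam ^ 2)) ^ 2) * (1 - b ^ 2) := by
    rw [div_pow, Real.sq_sqrt hpos.le]
    field_simp
    ring
  rw [add_div, ← Real.sqrt_div' _ hpos.le, hradicand, mul_div_right_comm]

lemma sq_sub_le_sq_div_sub {a b s : ℝ} (ha : 0 ≤ a) (hab : a ≤ b) (hs : 1 ≤ s) :
    (a - b) ^ 2 ≤ (a / s - b) ^ 2 := by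
  rw [sub_sq_comm a, sub_sq_comm (a / s)]
  exact pow_le_pow_left₀ (sub_nonneg.2 hab) (sub_le_sub_left (div_le_self ha hs) b) 2

theorem stmt12_general (a b lam : ℝ) (ha : 0 ≤ a) (hab : a ≤ b) (hb : b ≤ 1) :
    1 - (a * b + √((1 - a ^ 2) * (1 - b ^ 2) + lam ^ 2 * (1 - b ^ 2))) / √(1 + lam ^ 2) ≥
      (a - b) ^ 2 / 2 := by
  have hs : 1 ≤ √(1 + lam ^ 2) := Real.one_le_sqrt.2 (le_add_of_nonneg_right (sq_nonneg lam))
  have hc : (a / √(1 + lam ^ 2)) ^ 2 ≤ 1 :=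
    pow_le_one₀ (by positivity) ((div_le_self ha hs).trans (hab.trans hb))
  have hb2 : b ^ 2 ≤ 1 := pow_le_one₀ (ha.trans hab) hb
  calc
    (a - b) ^ 2 / 2 ≤ (a / √(1 + lam ^ 2) - b) ^ 2 / 2 := by
      gcongr ?_ / 2
      exact sq_sub_le_sq_div_sub ha hab hs
    _ ≤ 1 - (a / √(1 + lam ^ 2) * b + √((1 - (a / √(1 + lam ^ 2)) ^ 2) * (1 - b ^ 2))) :=
      half_sq_sub_le_one_sub_mul_add_sqrt hc hb2
    _ = _ := by rw [mul_add_sqrt_div_sqrt_one_add_sq]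

/-- the elementary real inequality
1 − (ab + √((1−a²)(1−b²) + λ²(1−b²)))/√(1+λ²) ≥ (a−b)²/4
for 0 ≤ a ≤ b ≤ 1 and 0 ≤ λ ≤ 1. -/
theorem stmt12 (a b lam : ℝ) (ha : 0 ≤ a) (hab : a ≤ b) (hb : b ≤ 1)
    (hl0 : 0 ≤ lam) (hl1 : lam ≤ 1) :
    1 - (a * b + Real.sqrt ((1 - a ^ 2) * (1 - b ^ 2) + lam ^ 2 * (1 - b ^ 2))) /
          Real.sqrt (1 + lam ^ 2) ≥
      (a - b) ^ 2 / 4 := by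
  linarith [stmt12_general a b lam ha hab hb, sq_nonneg (a - b)]
end

section
/- Let r ≥ 1 be an integer and let a, b be reals with 0 ≤ a < 1 and 0 ≤ b ≤ 1. Suppose s ∈ ℝʳ satisfies (s₁ − ab)²/(1 − a²) + Σ_{i=2}^{r} sᵢ² ≤ 1 − b², and t ∈ ℝʳ satisfies ‖t‖ ≤ 1 (Euclidean norm) and t₁ ≤ 0. Then sᵀt ≤ √(1 − b²). -/
open scoped BigOperators

/-!
The semi-axis along `e₁` is the shortest one, so the ellipsoid lies in the ball of radius
`√(1 - b ^ 2)` about `ab e₁`. On that ball `⟪·, t⟫` exceeds its value at the centre by at most the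
radius, since `‖t‖ ≤ 1`, and its value at the centre is `ab t₁ ≤ 0`.
-/

open scoped RealInnerProductSpace

section InnerProductSpace

variable {E : Type*} [NormedAddCommGroup E] [InnerProductSpace ℝ E]

theorem real_inner_le_of_norm_sub_le {c s t : E} {ρ : ℝ} (hs : ‖s - c‖ ≤ ρ) (ht : ‖t‖ ≤ 1)
    (hct : ⟪c, t⟫ ≤ 0) : ⟪s, t⟫ ≤ ρ :=
  calc ⟪s, t⟫ = ⟪c, t⟫ + ⟪s - c, t⟫ := by rw [← inner_add_left, add_sub_cancel]
    _ ≤ ⟪s - c, t⟫ := add_le_of_nonpos_left hct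
    _ ≤ ‖s - c‖ * ‖t‖ := real_inner_le_norm _ _
    _ ≤ ‖s - c‖ := mul_le_of_le_one_right (norm_nonneg _) ht
    _ ≤ ρ := hs

theorem norm_sub_smul_sq_of_norm_eq_one {e : E} (he : ‖e‖ = 1) (s : E) (d : ℝ) :
    ‖s - d • e‖ ^ 2 = (⟪e, s⟫ - d) ^ 2 + ‖s - ⟪e, s⟫ • e‖ ^ 2 := by
  have expand (x : ℝ) : ‖s - x • e‖ ^ 2 = ‖s‖ ^ 2 - 2 * (x * ⟪e, s⟫) + x ^ 2 := by
    rw [norm_sub_sq_real, real_inner_smul_right, real_inner_comm, norm_smul, he, mul_one,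
      Real.norm_eq_abs, sq_abs]
  rw [expand, expand]
  ring

theorem norm_sub_smul_le_sqrt_of_ellipsoid {e s : E} {d w R : ℝ} (he : ‖e‖ = 1) (hw₀ : 0 < w)
    (hw₁ : w ≤ 1) (hs : (⟪e, s⟫ - d) ^ 2 / w + ‖s - ⟪e, s⟫ • e‖ ^ 2 ≤ R) :
    ‖s - d • e‖ ≤ √R := by
  refine Real.le_sqrt_of_sq_le ?_
  calc ‖s - d • e‖ ^ 2 = (⟪e, s⟫ - d) ^ 2 + ‖s - ⟪e, s⟫ • e‖ ^ 2 :=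
        norm_sub_smul_sq_of_norm_eq_one he s d
    _ ≤ (⟪e, s⟫ - d) ^ 2 / w + ‖s - ⟪e, s⟫ • e‖ ^ 2 := by
        gcongr
        exact le_div_self (sq_nonneg _) hw₀ hw₁
    _ ≤ R := hs

theorem stmt13_general {e s t : E} {d w R : ℝ} (he : ‖e‖ = 1) (hd : 0 ≤ d) (hw₀ : 0 < w)
    (hw₁ : w ≤ 1) (hs : (⟪e, s⟫ - d) ^ 2 / w + ‖s - ⟪e, s⟫ • e‖ ^ 2 ≤ R) (ht : ‖t‖ ≤ 1)
    (het : ⟪e, t⟫ ≤ 0) : ⟪s, t⟫ ≤ √R := by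
  refine real_inner_le_of_norm_sub_le (norm_sub_smul_le_sqrt_of_ellipsoid he hw₀ hw₁ hs) ht ?_
  rw [real_inner_smul_left]
  exact mul_nonpos_of_nonneg_of_nonpos hd het

end InnerProductSpace

theorem norm_sub_smul_single_sq_eq_sum_erase {ι : Type*} [Fintype ι] [DecidableEq ι] (i : ι)
    (x : EuclideanSpace ℝ ι) :
    ‖x - x i • EuclideanSpace.single i (1 : ℝ)‖ ^ 2 = ∑ j ∈ Finset.univ.erase i, x j ^ 2 := by
  rw [EuclideanSpace.real_norm_sq_eq, ← Finset.add_sum_erase _ _ (Finset.mem_univ i)]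
  have diag : (x - x i • EuclideanSpace.single i (1 : ℝ)) i = 0 := by simp
  rw [diag, zero_pow two_ne_zero, zero_add]
  refine Finset.sum_congr rfl fun j hj => ?_
  simp [Finset.ne_of_mem_erase hj]

theorem sum_mul_le_sqrt_of_ellipsoid {ι : Type*} [Fintype ι] [DecidableEq ι] {i : ι}
    {s t : ι → ℝ} {d w R : ℝ} (hd : 0 ≤ d) (hw₀ : 0 < w) (hw₁ : w ≤ 1)
    (hs : (s i - d) ^ 2 / w + ∑ j ∈ Finset.univ.erase i, s j ^ 2 ≤ R)
    (ht : √(∑ j, t j ^ 2) ≤ 1) (hti : t i ≤ 0) : ∑ j, s j * t j ≤ √R := by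
  have inner_single (x : EuclideanSpace ℝ ι) : ⟪EuclideanSpace.single i (1 : ℝ), x⟫ = x i := by
    rw [EuclideanSpace.inner_single_left, map_one, one_mul]
  have inner_toLp : ⟪WithLp.toLp 2 s, WithLp.toLp 2 t⟫ = ∑ j, s j * t j := by
    simp [PiLp.inner_apply, mul_comm]
  rw [← inner_toLp]
  refine stmt13_general (e := EuclideanSpace.single i 1) (by simp) hd hw₀ hw₁ ?_ ?_ ?_
  · rwa [inner_single, norm_sub_smul_single_sq_eq_sum_erase]
  · simpa only [EuclideanSpace.norm_eq, Real.norm_eq_abs, sq_abs] using ht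
  · rwa [inner_single]

/-- if s lies in the ellipsoid
(s₁ − ab)²/(1−a²) + Σ_{i≥2} sᵢ² ≤ 1 − b², t has Euclidean norm at most 1 and
t₁ ≤ 0, then sᵀt ≤ √(1 − b²). -/
theorem stmt13 (r : ℕ) (hr : 0 < r) (a b : ℝ)
    (ha0 : 0 ≤ a) (ha1 : a < 1) (hb0 : 0 ≤ b) (hb1 : b ≤ 1)
    (s t : Fin r → ℝ)
    (hs : (s ⟨0, hr⟩ - a * b) ^ 2 / (1 - a ^ 2) +
            (∑ i ∈ Finset.univ.erase (⟨0, hr⟩ : Fin r), (s i) ^ 2) ≤ 1 - b ^ 2)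
    (ht : Real.sqrt (∑ i, (t i) ^ 2) ≤ 1)
    (ht1 : t ⟨0, hr⟩ ≤ 0) :
    (∑ i, s i * t i) ≤ Real.sqrt (1 - b ^ 2) := by
  have ha : a ^ 2 < 1 := pow_lt_one₀ ha0 ha1 two_ne_zero
  exact sum_mul_le_sqrt_of_ellipsoid (mul_nonneg ha0 hb0) (sub_pos.2 ha)
    (sub_le_self 1 (sq_nonneg a)) hs ht ht1
end
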